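/- arXiv:1705.00171 — 3 statements merged into one kernel-verified Lean document; each statement's English description precedes it below -/
import Mathlib

section
/- For every integer L ≥ 3, the kernel of Π is one-dimensional and is spanned by the vector ψ ∈ ℝ^L with ψ₁ = ψ_L = 1/√2 and ψ_i = 1 for 2 ≤ i ≤ L−1; that is, Πv = 0 if and only if v is a scalar multiple of ψ. -/
open Matrix

/-- The `L × L` matrix `Π` (1-based indices translated to `Fin L`). -/
noncomputable def PiMat (L : ℕ) : Matrix (Fin L) (Fin L) ℝ :=
  Matrix.of fun i j =>
    if (i : ℕ) = (j : ℕ) then 1/2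
    else if ((i : ℕ) + 1 = (j : ℕ) ∧ ((i : ℕ) = 0 ∨ (i : ℕ) = L - 2)) ∨
            ((j : ℕ) + 1 = (i : ℕ) ∧ ((j : ℕ) = 0 ∨ (j : ℕ) = L - 2)) then
      -1/(2*Real.sqrt 2)
    else if (i : ℕ) + 1 = (j : ℕ) ∨ (j : ℕ) + 1 = (i : ℕ) then -1/4
    else 0

/-- The vector `ψ` with `ψ₁ = ψ_L = 1/√2` and `ψ_i = 1` otherwise. -/
noncomputable def psiVec (L : ℕ) : Fin L → ℝ :=
  fun i => if (i : ℕ) = 0 ∨ (i : ℕ) = L - 1 then 1/Real.sqrt 2 else 1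

open SimpleGraph

/-!
With `D = diagonal ψ` one has `D * Π * D = (1 / 4) • lapMatrix` for the path graph on `L` vertices:
`ψᵢ² = deg i / 2`, and the larger weight of a boundary edge compensates the smaller boundary value
of `ψ`. Since the path is connected, the kernel of its Laplacian consists of the constant vectors,
and `D` carries these to the multiples of `ψ`.
-/

lemma diagonal_mul_mul_diagonal_mulVec_eq_zero_iff {R m n : Type*} [Semiring R] [NoZeroDivisors R]
    [Fintype m] [DecidableEq m] [Fintype n] [DecidableEq n] {d : m → R} (hd : ∀ i, d i ≠ 0)
    (A : Matrix m n R) (e w : n → R) :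
    (diagonal d * A * diagonal e) *ᵥ w = 0 ↔ A *ᵥ (e * w) = 0 := by
  have diagonal_mulVec (x : n → R) : diagonal e *ᵥ x = e * x :=
    funext fun i ↦ mulVec_diagonal e x i
  simp only [← mulVec_mulVec, diagonal_mulVec, funext_iff, mulVec_diagonal, Pi.zero_apply,
    mul_eq_zero, hd, false_or]

section Laplacian

variable {V : Type*} [Fintype V] [DecidableEq V] {G : SimpleGraph V} [DecidableRel G.Adj]

lemma lapMatrix_mulVec_eq_zero_iff_exists_eq_const (hG : G.Preconnected) {x : V → ℝ} :
    G.lapMatrix ℝ *ᵥ x = 0 ↔ ∃ c, x = Function.const V c := by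
  rw [lapMatrix_mulVec_eq_zero_iff_forall_reachable]
  constructor
  · intro hx
    rcases isEmpty_or_nonempty V with _ | ⟨⟨i₀⟩⟩
    · exact ⟨0, Subsingleton.elim _ _⟩
    · exact ⟨x i₀, funext fun i ↦ hx i i₀ (hG i i₀)⟩
  · rintro ⟨c, rfl⟩ i j _
    rfl

lemma mulVec_eq_zero_iff_exists_eq_smul_of_diagonal_mul_mul_diagonal
    (hG : G.Preconnected) {A : Matrix V V ℝ} {d : V → ℝ} (hd : ∀ i, d i ≠ 0) {k : ℝ} (hk : k ≠ 0)
    (hA : diagonal d * A * diagonal d = k • G.lapMatrix ℝ) (v : V → ℝ) :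
    A *ᵥ v = 0 ↔ ∃ c : ℝ, v = c • d := by
  have hv : v = d * (v / d) := funext fun i ↦ (mul_div_cancel₀ (v i) (hd i)).symm
  calc
    A *ᵥ v = 0 ↔ (k • G.lapMatrix ℝ) *ᵥ (v / d) = 0 := by
      rw [← hA, diagonal_mul_mul_diagonal_mulVec_eq_zero_iff hd, ← hv]
    _ ↔ G.lapMatrix ℝ *ᵥ (v / d) = 0 := by rw [smul_mulVec, smul_eq_zero_iff_right hk]
    _ ↔ ∃ c, v / d = Function.const V c := lapMatrix_mulVec_eq_zero_iff_exists_eq_const hG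
    _ ↔ ∃ c : ℝ, v = c • d := exists_congr fun c ↦ by
      simp only [funext_iff, Pi.div_apply, Function.const_apply, Pi.smul_apply, smul_eq_mul,
        div_eq_iff (hd _)]

end Laplacian

lemma degree_pathGraph {n : ℕ} (i : Fin n) [Fintype ((pathGraph n).neighborSet i)] :
    (pathGraph n).degree i =
      (if 0 < (i : ℕ) then 1 else 0) + if (i : ℕ) + 1 < n then 1 else 0 := by
  have map_neighborFinset : ((pathGraph n).neighborFinset i).map Fin.valEmbedding =
      (if 0 < (i : ℕ) then {(i : ℕ) - 1} else ∅) ∪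
        if (i : ℕ) + 1 < n then {(i : ℕ) + 1} else ∅ := by
    ext j
    simp only [Finset.mem_map, mem_neighborFinset, pathGraph_adj, Fin.valEmbedding_apply,
      Fin.exists_iff, exists_prop, ← and_assoc, exists_eq_right]
    simp only [Finset.mem_union, apply_ite (j ∈ ·), Finset.mem_singleton, Finset.notMem_empty]
    grind
  rw [← card_neighborFinset_eq_degree, ← Finset.card_map Fin.valEmbedding, map_neighborFinset]
  split_ifs <;> grind

section Path

variable {L : ℕ}

lemma psiVec_ne_zero (i : Fin L) : psiVec L i ≠ 0 := by
  unfold psiVec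
  split_ifs <;> positivity

lemma psiVec_mul_self (hL : 2 ≤ L) (i : Fin L) [Fintype ((pathGraph L).neighborSet i)] :
    psiVec L i * psiVec L i = (pathGraph L).degree i / 2 := by
  by_cases hi : (i : ℕ) = 0 ∨ (i : ℕ) = L - 1
  · have degree_eq_one : (pathGraph L).degree i = 1 := by grind [degree_pathGraph]
    rw [psiVec, if_pos hi, degree_eq_one, div_mul_div_comm, Real.mul_self_sqrt zero_le_two,
      one_mul, Nat.cast_one]
  · have degree_eq_two : (pathGraph L).degree i = 2 := by grind [degree_pathGraph]
    rw [psiVec, if_neg hi, degree_eq_two]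
    norm_num

lemma psiVec_mul_piMat_mul_psiVec_of_adj (hL : 3 ≤ L) {i j : Fin L}
    (hij : (pathGraph L).Adj i j) : psiVec L i * PiMat L i j * psiVec L j = -1 / 4 := by
  rw [pathGraph_adj] at hij
  have piMat_boundary_edge (h : ((i : ℕ) = 0 ∨ (i : ℕ) = L - 1) ∨ (j : ℕ) = 0 ∨ (j : ℕ) = L - 1) :
      PiMat L i j = -1 / (2 * √2) := by
    simp only [PiMat, of_apply]
    grind
  have boundary_edge : 1 / √2 * (-1 / (2 * √2)) = (-1 / 4 : ℝ) := by
    rw [div_mul_div_comm, mul_left_comm, Real.mul_self_sqrt zero_le_two]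
    norm_num
  by_cases hi : (i : ℕ) = 0 ∨ (i : ℕ) = L - 1 <;> by_cases hj : (j : ℕ) = 0 ∨ (j : ℕ) = L - 1
  · omega
  · rw [psiVec, psiVec, if_pos hi, if_neg hj, piMat_boundary_edge (.inl hi), boundary_edge, mul_one]
  · rw [psiVec, psiVec, if_neg hi, if_pos hj, piMat_boundary_edge (.inr hj), one_mul, mul_comm,
      boundary_edge]
  · have piMat_inner_edge : PiMat L i j = -1 / 4 := by
      simp only [PiMat, of_apply]
      grind
    rw [psiVec, psiVec, if_neg hi, if_neg hj, piMat_inner_edge, one_mul, mul_one]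

lemma diagonal_psiVec_mul_piMat_mul_diagonal_psiVec (hL : 3 ≤ L)
    [DecidableRel (pathGraph L).Adj] :
    diagonal (psiVec L) * PiMat L * diagonal (psiVec L) =
      (1 / 4 : ℝ) • (pathGraph L).lapMatrix ℝ := by
  ext i j
  simp only [mul_diagonal, diagonal_mul, lapMatrix, degMatrix, Matrix.smul_apply, Matrix.sub_apply,
    adjMatrix_apply, smul_eq_mul]
  rcases eq_or_ne i j with rfl | hne
  · have piMat_self : PiMat L i i = 1 / 2 := if_pos rfl
    rw [piMat_self, mul_right_comm, psiVec_mul_self (by omega), diagonal_apply_eq,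
      if_neg (pathGraph L).irrefl]
    ring
  rw [diagonal_apply_ne _ hne]
  by_cases hij : (pathGraph L).Adj i j
  · rw [psiVec_mul_piMat_mul_psiVec_of_adj hL hij, if_pos hij]
    norm_num
  · have piMat_eq_zero : PiMat L i j = 0 := by
      rw [pathGraph_adj] at hij
      simp only [PiMat, of_apply]
      grind
    simp only [piMat_eq_zero, if_neg hij, mul_zero, zero_mul, sub_zero]

end Path

theorem stmt_5 (L : ℕ) (hL : 3 ≤ L) (v : Fin L → ℝ) :
    (PiMat L).mulVec v = 0 ↔ ∃ c : ℝ, v = c • psiVec L := by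
  classical
  exact mulVec_eq_zero_iff_exists_eq_smul_of_diagonal_mul_mul_diagonal
    (pathGraph_preconnected L) psiVec_ne_zero (by norm_num)
    (diagonal_psiVec_mul_piMat_mul_diagonal_psiVec hL) v
end

section
/- Let L ≥ 5 be an integer and λ > 0 a real number, and let μ(λ) denote the largest eigenvalue of the 3×3 real symmetric matrix M(λ) with entries M₁₁ = M₂₂ = 1 − λ/2, M₃₃ = (1 − λ)/2, M₁₂ = M₂₁ = λ/(2√2), M₂₃ = M₃₂ = λ/4, M₁₃ = M₃₁ = 0. Then for every a ∈ {0,1}^L with exactly three ones and every vector v ∈ ℝ^L such that v_i = 0 whenever a_i = 0, one has vᵀ(Π^{ph}_a − λΠ)v ≤ μ(λ)·‖v‖². -/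
/-!
On vectors supported on three sites `p < q < r`, the form `Π^{ph}_a - λΠ` is given by a `3 × 3`
tridiagonal matrix with diagonal entries at most `1 - λ/2` and off-diagonal entries at most
`|λ| / (2√2)` in absolute value. The outer diagonal entry at one end of the triple can exceed
`(1 - λ)/2`, or the outer edge there exceed `|λ| / 4`, only if the two sites at that end are the
first two or the last two of the chain, and for `L ≥ 4` this cannot happen at both ends. So after
reversing the triple if necessary `M(λ)` dominates the `3 × 3` matrix entrywise, up to flipping the
sign of the middle coordinate when `λ < 0`, and the form at `v` is at most the form of `M(λ)` at
`(|v_p|, ± |v_q|, |v_r|)`.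
-/

open Matrix

/-- `μ` is the largest (real) eigenvalue of the matrix `A`. -/
def IsMaxEigenvalue {n : ℕ} (A : Matrix (Fin n) (Fin n) ℝ) (μ : ℝ) : Prop :=
  (∃ v : Fin n → ℝ, v ≠ 0 ∧ A.mulVec v = μ • v) ∧
  ∀ μ' : ℝ, (∃ v : Fin n → ℝ, v ≠ 0 ∧ A.mulVec v = μ' • v) → μ' ≤ μ

noncomputable def M3 (l : ℝ) : Matrix (Fin 3) (Fin 3) ℝ :=
  !![1 - l/2, l/(2*Real.sqrt 2), 0;
     l/(2*Real.sqrt 2), 1 - l/2, l/4;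
     0, l/4, (1 - l)/2]

/-- The diagonal matrix `Π^{ph}_a` (1-based indices translated to `Fin L`). -/
noncomputable def PiPh (L : ℕ) (a : Fin L → ℝ) : Matrix (Fin L) (Fin L) ℝ :=
  Matrix.diagonal fun i =>
    let a' : ℕ → ℝ := fun k => if h : k < L then a ⟨k, h⟩ else 0
    if (i : ℕ) = 0 then a' 1
    else if (i : ℕ) = L - 1 then a' (L - 2)
    else (a' ((i : ℕ) - 1) + a' ((i : ℕ) + 1)) / 2

lemma exists_orderEmbedding_forall_notMem_range {α M : Type*} [LinearOrder α] [Fintype α] [Zero M]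
    [DecidableEq M] {a : α → M} {k : ℕ} (ha : (Finset.univ.filter fun i => a i ≠ 0).card ≤ k)
    (hk : k ≤ Fintype.card α) : ∃ f : Fin k ↪o α, ∀ i ∉ Set.range f, a i = 0 := by
  obtain ⟨S, hsub, hcard⟩ := Finset.exists_superset_card_eq ha hk
  refine ⟨S.orderEmbOfFin hcard, fun i hi => ?_⟩
  rw [Finset.range_orderEmbOfFin, Finset.mem_coe] at hi
  by_contra hne
  exact hi (hsub (by simpa using hne))

section QuadraticForm

variable {m n : Type*} [Fintype m] [Fintype n]

lemma dotProduct_comp_of_injective {R : Type*} [NonUnitalNonAssocSemiring R] {f : m → n}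
    (hf : Function.Injective f) {v : n → R} (hv : ∀ i ∉ Set.range f, v i = 0) (w : n → R) :
    (w ∘ f) ⬝ᵥ (v ∘ f) = w ⬝ᵥ v :=
  Fintype.sum_of_injective f hf _ _ (fun i hi => by rw [hv i hi, mul_zero]) fun _ => rfl

lemma dotProduct_submatrix_mulVec_of_injective {R : Type*} [NonUnitalCommSemiring R] {f : m → n}
    (hf : Function.Injective f) (A : Matrix n n R) {v : n → R}
    (hv : ∀ i ∉ Set.range f, v i = 0) :
    (v ∘ f) ⬝ᵥ A.submatrix f f *ᵥ (v ∘ f) = v ⬝ᵥ A *ᵥ v := by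
  have hmulVec : A.submatrix f f *ᵥ (v ∘ f) = (A *ᵥ v) ∘ f :=
    funext fun i => dotProduct_comp_of_injective hf hv (A (f i))
  rw [hmulVec, dotProduct_comm, dotProduct_comp_of_injective hf hv, dotProduct_comm]

lemma dotProduct_mulVec_le_dotProduct_mulVec_abs {R : Type*} [CommRing R] [LinearOrder R]
    [IsStrictOrderedRing R] {A B : Matrix n n R} {s : n → R} (hs : ∀ i, s i * s i = 1)
    (hdiag : ∀ i, A i i ≤ B i i) (hoff : ∀ i j, i ≠ j → |A i j| ≤ s i * B i j * s j)
    (x : n → R) : x ⬝ᵥ A *ᵥ x ≤ (s * |x|) ⬝ᵥ B *ᵥ (s * |x|) := by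
  simp only [dotProduct, mulVec, Finset.mul_sum, Pi.mul_apply, Pi.abs_apply]
  refine Finset.sum_le_sum fun i _ => Finset.sum_le_sum fun j _ => ?_
  obtain rfl | hij := eq_or_ne i j
  · calc x i * (A i i * x i) = A i i * x i ^ 2 := by ring
      _ ≤ B i i * x i ^ 2 := by gcongr; exact hdiag i
      _ = s i * |x i| * (B i i * (s i * |x i|)) := by
        linear_combination (-B i i * |x i| ^ 2) * hs i - B i i * sq_abs (x i)
  · calc x i * (A i j * x j) ≤ |x i * (A i j * x j)| := le_abs_self _
      _ = |A i j| * (|x i| * |x j|) := by rw [abs_mul, abs_mul]; ring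
      _ ≤ s i * B i j * s j * (|x i| * |x j|) := by gcongr; exact hoff i j hij
      _ = s i * |x i| * (B i j * (s j * |x j|)) := by ring

end QuadraticForm

namespace IsMaxEigenvalue

variable {n : ℕ} {A B : Matrix (Fin n) (Fin n) ℝ} {μ : ℝ}

lemma le_of_mem_spectrum (h : IsMaxEigenvalue B μ) {r : ℝ} (hr : r ∈ spectrum ℝ B) : r ≤ μ := by
  rw [← spectrum_toLin', ← Module.End.hasEigenvalue_iff_mem_spectrum] at hr
  obtain ⟨v, hv⟩ := hr.exists_hasEigenvector
  exact h.2 r ⟨v, hv.2, hv.apply_eq_smul⟩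

open scoped MatrixOrder in
lemma dotProduct_mulVec_le (h : IsMaxEigenvalue B μ) (hB : B.IsHermitian) (x : Fin n → ℝ) :
    x ⬝ᵥ B *ᵥ x ≤ μ * (x ⬝ᵥ x) := by
  have hle : B ≤ algebraMap ℝ _ μ :=
    le_algebraMap_of_spectrum_le (fun _ hr => h.le_of_mem_spectrum hr) hB
  have hpos := (Matrix.le_iff.mp hle).dotProduct_mulVec_nonneg x
  simpa [sub_mulVec, Algebra.algebraMap_eq_smul_one, smul_mulVec] using hpos

lemma dotProduct_mulVec_le_of_abs_le (h : IsMaxEigenvalue B μ) (hB : B.IsHermitian)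
    {s : Fin n → ℝ} (hs : ∀ i, s i * s i = 1) (hdiag : ∀ i, A i i ≤ B i i)
    (hoff : ∀ i j, i ≠ j → |A i j| ≤ s i * B i j * s j) (x : Fin n → ℝ) :
    x ⬝ᵥ A *ᵥ x ≤ μ * (x ⬝ᵥ x) := by
  have hnorm : (s * |x|) ⬝ᵥ (s * |x|) = x ⬝ᵥ x := by
    refine Finset.sum_congr rfl fun i _ => ?_
    rw [Pi.mul_apply, Pi.abs_apply, mul_mul_mul_comm, hs, one_mul, abs_mul_abs_self]
  calc x ⬝ᵥ A *ᵥ x ≤ (s * |x|) ⬝ᵥ B *ᵥ (s * |x|) :=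
        dotProduct_mulVec_le_dotProduct_mulVec_abs hs hdiag hoff x
    _ ≤ μ * ((s * |x|) ⬝ᵥ (s * |x|)) := h.dotProduct_mulVec_le hB _
    _ = μ * (x ⬝ᵥ x) := by rw [hnorm]

end IsMaxEigenvalue

lemma isHermitian_m3 (l : ℝ) : (M3 l).IsHermitian := by
  ext i j
  fin_cases i <;> fin_cases j <;> simp [M3]

section Chain

variable {L : ℕ} {a : Fin L → ℝ} {i j : Fin L}

lemma quarter_le_one_div_two_mul_sqrt_two : (1 / 4 : ℝ) ≤ 1 / (2 * √2) := by
  have hsqrt : √2 ≤ 2 := Real.sqrt_le_iff.mpr (by norm_num)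
  gcongr
  linarith

lemma piMat_comm (i j : Fin L) : PiMat L i j = PiMat L j i := by
  simp only [PiMat, of_apply, eq_comm, or_comm]

lemma piMat_apply_self (i : Fin L) : PiMat L i i = 1 / 2 := by
  simp [PiMat]

lemma piMat_apply_eq_zero (h : (i : ℕ) + 1 < j) : PiMat L i j = 0 := by
  simp only [PiMat, of_apply]
  rw [if_neg (by omega), if_neg (by omega), if_neg (by omega)]

lemma abs_piMat_le (h : i ≠ j) : |PiMat L i j| ≤ 1 / (2 * √2) := by
  have hquarter := quarter_le_one_div_two_mul_sqrt_two
  have hpos : 0 < 1 / (2 * √2) := by positivity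
  simp only [PiMat, of_apply, if_neg (Fin.val_ne_of_ne h), neg_div]
  split_ifs
  · rw [abs_neg, abs_of_pos hpos]
  · rwa [abs_neg, abs_of_pos (by norm_num)]
  · rw [abs_zero]; exact hpos.le

lemma abs_piMat_le_quarter (hij : i < j) (hleft : (i : ℕ) = 0 → (j : ℕ) ≠ 1)
    (hright : (i : ℕ) + 2 = L → (j : ℕ) + 1 ≠ L) : |PiMat L i j| ≤ 1 / 4 := by
  simp only [PiMat, of_apply]
  rw [if_neg (by omega), if_neg (by omega)]
  split_ifs <;> norm_num [abs_of_neg]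

lemma piPh_apply_self_le_one (ha : ∀ i, a i ≤ 1) (i : Fin L) : PiPh L a i i ≤ 1 := by
  simp only [PiPh, diagonal_apply_eq]
  grind

lemma piPh_apply_self_le_half (ha : ∀ i, a i ≤ 1) (hadj : (i : ℕ) + 1 = j ∨ (j : ℕ) + 1 = i)
    (hj : a j = 0) : PiPh L a i i ≤ 1 / 2 := by
  simp only [PiPh, diagonal_apply_eq]
  grind

section Triple

variable {p q r : Fin L}

lemma piPh_apply_last_le_half (ha : ∀ i, a i ≤ 1)
    (hzero : ∀ j, j ≠ p → j ≠ q → j ≠ r → a j = 0) (hpq : p < q) (hqr : q < r)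
    (hend : (q : ℕ) + 2 = L → (r : ℕ) + 1 ≠ L) : PiPh L a r r ≤ 1 / 2 := by
  by_cases hr : (r : ℕ) + 1 = L
  · exact piPh_apply_self_le_half (j := ⟨r - 1, by omega⟩) ha (.inr (by grind))
      (hzero _ (by grind) (by grind) (by grind))
  · exact piPh_apply_self_le_half (j := ⟨r + 1, by omega⟩) ha (.inl rfl)
      (hzero _ (by grind) (by grind) (by grind))

lemma piPh_apply_first_le_half (ha : ∀ i, a i ≤ 1)
    (hzero : ∀ j, j ≠ p → j ≠ q → j ≠ r → a j = 0) (hpq : p < q) (hqr : q < r)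
    (hstart : (p : ℕ) = 0 → (q : ℕ) ≠ 1) : PiPh L a p p ≤ 1 / 2 := by
  by_cases hp : (p : ℕ) = 0
  · exact piPh_apply_self_le_half (j := ⟨p + 1, by omega⟩) ha (.inl rfl)
      (hzero _ (by grind) (by grind) (by grind))
  · exact piPh_apply_self_le_half (j := ⟨p - 1, by omega⟩) ha (.inr (by grind))
      (hzero _ (by grind) (by grind) (by grind))

end Triple

end Chain

lemma isSymm_piPh_sub_smul_piMat (L : ℕ) (a : Fin L → ℝ) (l : ℝ) :
    (PiPh L a - l • PiMat L).IsSymm :=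
  (isSymm_diagonal _).sub (IsSymm.smul (IsSymm.ext fun i j => piMat_comm j i) l)

section Comparison

variable {l μ : ℝ}

lemma dotProduct_mulVec_le_of_le_m3 (hμ : IsMaxEigenvalue (M3 l) μ)
    {A : Matrix (Fin 3) (Fin 3) ℝ} (hA : A.IsSymm) (h00 : A 0 0 ≤ 1 - l / 2)
    (h11 : A 1 1 ≤ 1 - l / 2) (h22 : A 2 2 ≤ (1 - l) / 2) (h01 : |A 0 1| ≤ |l| * (1 / (2 * √2)))
    (h12 : |A 1 2| ≤ |l| * (1 / 4)) (h02 : A 0 2 = 0) (x : Fin 3 → ℝ) :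
    x ⬝ᵥ A *ᵥ x ≤ μ * (x ⬝ᵥ x) := by
  obtain ⟨σ, hσ, hσl⟩ : ∃ σ : ℝ, σ * σ = 1 ∧ |l| = σ * l := by
    rcases abs_choice l with h | h
    · exact ⟨1, by norm_num, by rw [h, one_mul]⟩
    · exact ⟨-1, by norm_num, by rw [h, neg_one_mul]⟩
  rw [hσl, mul_assoc, mul_one_div] at h01 h12
  have h01' : |A 0 1| ≤ l / (2 * √2) * σ := by rwa [mul_comm]
  have h10 : |A 1 0| ≤ σ * (l / (2 * √2)) := by rwa [hA.apply]
  have h21 : |A 2 1| ≤ l / 4 * σ := by rwa [hA.apply, mul_comm]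
  have h20 : A 2 0 = 0 := by rwa [hA.apply]
  refine hμ.dotProduct_mulVec_le_of_abs_le (s := ![1, σ, 1]) (isHermitian_m3 l) ?_ ?_ ?_ x
  · simp [Fin.forall_fin_succ, hσ]
  · simp [Fin.forall_fin_succ, M3, h00, h11, h22]
  · simp [Fin.forall_fin_succ, M3, h01', h12, h02, h10, h21, h20]

/- `f` need not be monotone: it lists the three sites from either end, so that `f 2` can be chosen
to be the end at which the site and the edge are not favourable. -/
lemma dotProduct_mulVec_le_of_three_sites (hμ : IsMaxEigenvalue (M3 l) μ) {L : ℕ}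
    {a v : Fin L → ℝ} (ha : ∀ i, a i ≤ 1) {f : Fin 3 → Fin L} (hf : Function.Injective f)
    (hv : ∀ i ∉ Set.range f, v i = 0) (hsite : PiPh L a (f 2) (f 2) ≤ 1 / 2)
    (hedge : |PiMat L (f 1) (f 2)| ≤ 1 / 4) (hfar : PiMat L (f 0) (f 2) = 0) :
    v ⬝ᵥ (PiPh L a - l • PiMat L) *ᵥ v ≤ μ * ∑ i, v i ^ 2 := by
  have hnorm : ∑ i, v i ^ 2 = (v ∘ f) ⬝ᵥ (v ∘ f) := by
    rw [dotProduct_comp_of_injective hf hv, dotProduct]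
    simp only [sq]
  have hdiag (i : Fin L) : (PiPh L a - l • PiMat L) i i = PiPh L a i i - l / 2 := by
    rw [Matrix.sub_apply, Matrix.smul_apply, piMat_apply_self, smul_eq_mul, mul_one_div]
  have hoff {i j : Fin 3} (hij : i ≠ j) :
      (PiPh L a - l • PiMat L) (f i) (f j) = -(l * PiMat L (f i) (f j)) := by
    rw [Matrix.sub_apply, PiPh, diagonal_apply_ne _ (hf.ne hij), zero_sub,
      Matrix.smul_apply, smul_eq_mul]
  rw [hnorm, ← dotProduct_submatrix_mulVec_of_injective hf _ hv]
  apply dotProduct_mulVec_le_of_le_m3 hμ ((isSymm_piPh_sub_smul_piMat L a l).submatrix f) <;>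
    simp only [submatrix_apply]
  · linarith [hdiag (f 0), piPh_apply_self_le_one ha (f 0)]
  · linarith [hdiag (f 1), piPh_apply_self_le_one ha (f 1)]
  · linarith [hdiag (f 2)]
  · rw [hoff (by decide), abs_neg, abs_mul]
    gcongr
    exact abs_piMat_le (hf.ne (by decide))
  · rw [hoff (by decide), abs_neg, abs_mul]
    gcongr
  · rw [hoff (by decide), hfar, mul_zero, neg_zero]

end Comparison

theorem stmt_10_general (L : ℕ) (hL : 4 ≤ L) (lam μ : ℝ) (hμ : IsMaxEigenvalue (M3 lam) μ)
    (a : Fin L → ℝ) (ha : ∀ i, a i ≤ 1)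
    (hsupp : (Finset.univ.filter fun i => a i ≠ 0).card ≤ 3)
    (v : Fin L → ℝ) (hv : ∀ i, a i = 0 → v i = 0) :
    v ⬝ᵥ (PiPh L a - lam • PiMat L) *ᵥ v ≤ μ * ∑ i, v i ^ 2 := by
  obtain ⟨f, hf⟩ := exists_orderEmbedding_forall_notMem_range hsupp (by simp; omega)
  have h01 : f 0 < f 1 := f.strictMono (by decide)
  have h12 : f 1 < f 2 := f.strictMono (by decide)
  have hzero (j : Fin L) (h0 : j ≠ f 0) (h1 : j ≠ f 1) (h2 : j ≠ f 2) : a j = 0 :=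
    hf j (by simp [Fin.exists_fin_succ, h0.symm, h1.symm, h2.symm])
  have hfar : PiMat L (f 0) (f 2) = 0 := piMat_apply_eq_zero (by omega)
  have hsupport (i : Fin L) (hi : i ∉ Set.range f) : v i = 0 := hv i (hf i hi)
  by_cases hend : (f 1 : ℕ) + 2 = L ∧ (f 2 : ℕ) + 1 = L
  · have hstart : (f 0 : ℕ) = 0 → (f 1 : ℕ) ≠ 1 := by omega
    have hedge : |PiMat L (f 1) (f 0)| ≤ 1 / 4 :=
      piMat_comm (f 0) (f 1) ▸ abs_piMat_le_quarter h01 hstart (by omega)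
    exact dotProduct_mulVec_le_of_three_sites hμ ha (f.injective.comp Fin.rev_injective)
      (by rwa [Fin.rev_surjective.range_comp]) (piPh_apply_first_le_half ha hzero h01 h12 hstart)
      hedge ((piMat_comm _ _).trans hfar)
  · rw [not_and] at hend
    exact dotProduct_mulVec_le_of_three_sites hμ ha f.injective hsupport
      (piPh_apply_last_le_half ha hzero h01 h12 hend) (abs_piMat_le_quarter h12 (by omega) hend)
      hfar

theorem stmt_10 (L : ℕ) (hL : 5 ≤ L) (lam : ℝ) (hlam : 0 < lam)
    (μ : ℝ) (hμ : IsMaxEigenvalue (M3 lam) μ)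
    (a : Fin L → ℝ) (ha01 : ∀ i, a i = 0 ∨ a i = 1)
    (ha3 : (Finset.univ.filter fun i => a i = 1).card = 3)
    (v : Fin L → ℝ) (hv : ∀ i, a i = 0 → v i = 0) :
    v ⬝ᵥ (PiPh L a - lam • PiMat L).mulVec v ≤ μ * ∑ i, (v i)^2 := by
  have hle (i : Fin L) : a i ≤ 1 := by
    obtain h | h := ha01 i <;> simp [h]
  have hcard : (Finset.univ.filter fun i => a i ≠ 0).card ≤ 3 :=
    ha3 ▸ Finset.card_le_card (Finset.monotone_filter_right _ fun i _ h => (ha01 i).resolve_left h)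
  exact stmt_10_general L (by omega) lam μ hμ a hle hcard v hv
end

section
/- Let L ≥ 5 be an integer, w > 0 a real number, and y a real number with 0 ≤ y ≤ 1. If x is the largest zero of the function t ↦ F(L, t, w, y) (i.e., F(L, x, w, y) = 0 and F(L, x', w, y) ≠ 0 for all x' > x) and x̄ is the largest zero of t ↦ F(L, t, w, 1), then x ≤ x̄. -/
/-!
Write `D t = 2 w cosh t - cosh (2 t)` for the factor of the `y`-dependent term of `F`. Division by
`D` leaves a remainder that involves neither `w` nor `y`:
`F(L,t,w,y) = D t * (…) - sinh t * sinh ((L-5) t)`.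
Let `|y| ≤ |y'| ≤ 1` and let `x` be a zero of `F(L,·,w,y)`. If `D x ≤ 0`, then replacing `y` by `y'`
can only decrease `F` at `x`. If `D x > 0`, then `D` has a zero `t ≥ x`, where `F` equals the
remainder, which is nonpositive for `L ≥ 5`. Either way `F(L,·,w,y')` is nonpositive at some point
`≥ x`; for large arguments it is nonnegative, so it has a zero `≥ x`.
-/

/-- The function `F(L,x,w,y)` from the paper. -/
noncomputable def Ffun (L : ℕ) (x w y : ℝ) : ℝ :=
  (1/2)*Real.cosh ((L:ℝ)*x) - 2*w*Real.cosh (((L:ℝ)-1)*x)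
    + (2*w^2 - 1/2)*Real.cosh (((L:ℝ)-2)*x) + 2*w^2*Real.cosh (((L:ℝ)-4)*x)
    + 2*w*(2*w*Real.cosh x - Real.cosh (2*x))*Real.cosh (((L:ℝ)-3)*x*y)

section

open Real Filter

theorem exists_ge_eq_zero_of_frequently_nonneg {f : ℝ → ℝ} {a : ℝ} (hf : Continuous f)
    (ha : f a ≤ 0) (htop : ∃ᶠ t in atTop, 0 ≤ f t) : ∃ z, a ≤ z ∧ f z = 0 := by
  obtain ⟨b, hab, hb⟩ := frequently_atTop.1 htop a
  obtain ⟨z, hz, hz0⟩ := intermediate_value_Icc hab hf.continuousOn ⟨ha, hb⟩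
  exact ⟨z, hz.1, hz0⟩

theorem sinh_mul_sinh_mul_nonneg {c : ℝ} (hc : 0 ≤ c) (t : ℝ) : 0 ≤ sinh t * sinh (c * t) := by
  rcases le_total 0 t with ht | ht
  · exact mul_nonneg (sinh_nonneg_iff.2 ht) (sinh_nonneg_iff.2 (mul_nonneg hc ht))
  · exact mul_nonneg_of_nonpos_of_nonpos (sinh_nonpos_iff.2 ht)
      (sinh_nonpos_iff.2 (mul_nonpos_of_nonneg_of_nonpos hc ht))

theorem cosh_le_two_mul_sinh {u : ℝ} (hu : 1 ≤ u) : cosh u ≤ 2 * sinh u := by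
  have hsinh : 1 ≤ sinh u := hu.trans (self_le_sinh_iff.2 (by linarith))
  have hsq := cosh_sq u
  nlinarith

theorem cosh_mul_le_cosh_mul_of_abs_le {y y' : ℝ} (hy : |y| ≤ |y'|) (u : ℝ) :
    cosh (u * y) ≤ cosh (u * y') := by
  rw [cosh_le_cosh, abs_mul, abs_mul]
  gcongr

/-- The factor `D` of the `y`-dependent term of `Ffun`; at its zeros `Ffun` does not depend on
`y`. -/
noncomputable def yFactor (w t : ℝ) : ℝ := 2 * w * cosh t - cosh (2 * t)

theorem continuous_yFactor (w : ℝ) : Continuous (yFactor w) := by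
  unfold yFactor
  fun_prop

theorem yFactor_le_neg_one {w t : ℝ} (hw : 0 ≤ w) (ht : w + 1 ≤ t) : yFactor w t ≤ -1 := by
  have hcosh : w + 1 ≤ cosh t :=
    ht.trans ((self_le_sinh_iff.2 (by linarith)).trans (sinh_lt_cosh t).le)
  have hprod : 1 ≤ cosh t * (cosh t - w) :=
    one_le_mul_of_one_le_of_one_le (one_le_cosh t) (by linarith)
  rw [yFactor, cosh_two_mul, sinh_sq]
  linarith

theorem exists_ge_yFactor_eq_zero {w x : ℝ} (hw : 0 ≤ w) (hx : 0 ≤ yFactor w x) :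
    ∃ t, x ≤ t ∧ yFactor w t = 0 := by
  have htop : ∀ᶠ t in atTop, 0 ≤ -yFactor w t := by
    filter_upwards [eventually_ge_atTop (w + 1)] with t ht
    linarith [yFactor_le_neg_one hw ht]
  simpa only [Pi.neg_apply, neg_eq_zero] using exists_ge_eq_zero_of_frequently_nonneg
    (continuous_yFactor w).neg (neg_nonpos.2 hx) htop.frequently

theorem continuous_Ffun (L : ℕ) (w y : ℝ) : Continuous fun t => Ffun L t w y := by
  unfold Ffun
  fun_prop

theorem Ffun_eq_yFactor_mul_sub (L : ℕ) (x w y : ℝ) :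
    Ffun L x w y = yFactor w x * (2 * w * (cosh ((L - 3) * x) + cosh ((L - 3) * x * y))
      - 2 * (sinh ((L - 3) * x) * sinh x)) - sinh x * sinh ((L - 5) * x) := by
  have h0 : (L : ℝ) * x = (L - 3) * x + 2 * x + x := by ring
  have h1 : ((L : ℝ) - 1) * x = (L - 3) * x + 2 * x := by ring
  have h2 : ((L : ℝ) - 2) * x = (L - 3) * x + x := by ring
  have h4 : ((L : ℝ) - 4) * x = (L - 3) * x - x := by ring
  have h5 : ((L : ℝ) - 5) * x = (L - 3) * x - 2 * x := by ring
  rw [Ffun, yFactor, h0, h1, h2, h4, h5]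
  simp only [cosh_add, cosh_sub, sinh_add, sinh_sub, sinh_two_mul, cosh_two_mul]
  linear_combination (cosh ((L - 3) * x) * cosh x + sinh ((L - 3) * x) * sinh x) / 2 * cosh_sq x

theorem Ffun_nonpos_of_yFactor_eq_zero {L : ℕ} (hL : 5 ≤ L) {w t : ℝ} (ht : yFactor w t = 0)
    (y : ℝ) : Ffun L t w y ≤ 0 := by
  have hL' : (0 : ℝ) ≤ L - 5 := sub_nonneg.2 (by exact_mod_cast hL)
  rw [Ffun_eq_yFactor_mul_sub, ht, zero_mul, zero_sub, neg_nonpos]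
  exact sinh_mul_sinh_mul_nonneg hL' t

theorem Ffun_le_Ffun_of_yFactor_nonpos (L : ℕ) {w x y y' : ℝ} (hw : 0 ≤ w)
    (hx : yFactor w x ≤ 0) (hy : |y| ≤ |y'|) : Ffun L x w y' ≤ Ffun L x w y := by
  have hcoeff : 2 * w * yFactor w x ≤ 0 := mul_nonpos_of_nonneg_of_nonpos (by linarith) hx
  unfold Ffun
  exact add_le_add_right (mul_le_mul_of_nonpos_left (cosh_mul_le_cosh_mul_of_abs_le hy _) hcoeff) _

theorem eventually_Ffun_nonneg {L : ℕ} (hL : 4 ≤ L) {w y : ℝ} (hw : 0 ≤ w) (hy : |y| ≤ 1) :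
    ∀ᶠ t in atTop, 0 ≤ Ffun L t w y := by
  have hL' : (4 : ℝ) ≤ L := by exact_mod_cast hL
  filter_upwards [eventually_ge_atTop (8 * w + 1)] with t ht
  set u : ℝ := (L - 3) * t with hu
  have htu : t ≤ u := le_mul_of_one_le_left (by linarith) (by linarith)
  have hsinh_t : 8 * w ≤ sinh t := by linarith [self_le_sinh_iff.2 (show 0 ≤ t by linarith)]
  have hsinh_u : 0 ≤ sinh u := sinh_nonneg_iff.2 (by linarith)
  have hcosh_u : cosh u ≤ 2 * sinh u := cosh_le_two_mul_sinh (by linarith)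
  have hcosh_uy : cosh (u * y) ≤ cosh u := by
    simpa only [mul_one] using cosh_mul_le_cosh_mul_of_abs_le (hy.trans_eq abs_one.symm) u
  have hrem : sinh t * sinh ((L - 5) * t) ≤ sinh t * sinh u :=
    mul_le_mul_of_nonneg_left (sinh_le_sinh.2 (by linarith)) (by linarith)
  have hcofactor : 2 * w * (cosh u + cosh (u * y)) ≤ sinh u * sinh t :=
    calc 2 * w * (cosh u + cosh (u * y)) ≤ 2 * w * (2 * sinh u + 2 * sinh u) := by
          gcongr
          exact hcosh_uy.trans hcosh_u
      _ = sinh u * (8 * w) := by ring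
      _ ≤ sinh u * sinh t := by gcongr
  have hD : yFactor w t ≤ -1 := yFactor_le_neg_one hw (by linarith)
  have hprod : 0 ≤ sinh u * sinh t := mul_nonneg hsinh_u (by linarith)
  have hmain : sinh u * sinh t
      ≤ -yFactor w t * (2 * (sinh u * sinh t) - 2 * w * (cosh u + cosh (u * y))) :=
    calc sinh u * sinh t ≤ 2 * (sinh u * sinh t) - 2 * w * (cosh u + cosh (u * y)) := by linarith
      _ ≤ _ := le_mul_of_one_le_left (by linarith) (by linarith)
  rw [Ffun_eq_yFactor_mul_sub, ← hu]
  linarith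

end

theorem stmt_16_general {L : ℕ} (hL : 5 ≤ L) {w y y' x : ℝ} (hw : 0 ≤ w) (hy : |y| ≤ |y'|)
    (hy' : |y'| ≤ 1) (hx : Ffun L x w y = 0) : ∃ z, x ≤ z ∧ Ffun L z w y' = 0 := by
  obtain ⟨a, hxa, ha⟩ : ∃ a, x ≤ a ∧ Ffun L a w y' ≤ 0 := by
    rcases le_total (yFactor w x) 0 with hD | hD
    · exact ⟨x, le_rfl, (Ffun_le_Ffun_of_yFactor_nonpos L hw hD hy).trans_eq hx⟩
    · obtain ⟨t, hxt, ht⟩ := exists_ge_yFactor_eq_zero hw hD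
      exact ⟨t, hxt, Ffun_nonpos_of_yFactor_eq_zero hL ht y'⟩
  obtain ⟨z, haz, hz⟩ := exists_ge_eq_zero_of_frequently_nonneg (continuous_Ffun L w y') ha
    (eventually_Ffun_nonneg (by lia) hw hy').frequently
  exact ⟨z, hxa.trans haz, hz⟩

theorem stmt_16 (L : ℕ) (hL : 5 ≤ L) (w : ℝ) (hw : 0 < w) (y : ℝ)
    (hy0 : 0 ≤ y) (hy1 : y ≤ 1) (x xbar : ℝ)
    (hx : Ffun L x w y = 0 ∧ ∀ x' : ℝ, x < x' → Ffun L x' w y ≠ 0)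
    (hxbar : Ffun L xbar w 1 = 0 ∧ ∀ x' : ℝ, xbar < x' → Ffun L x' w 1 ≠ 0) :
    x ≤ xbar := by
  obtain ⟨z, hxz, hz⟩ := stmt_16_general hL hw.le
    (by rwa [abs_one, abs_of_nonneg hy0]) abs_one.le hx.1
  exact hxz.trans (not_lt.1 fun hlt => hxbar.2 z hlt hz)
end
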